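/- In the Gaussian signal model, for any real numbers α < m < β and any s_a: E_a(s_a, [m, β]) > E_a(s_a, [α, β]) > E_a(s_a, [α, m]). That is, conditioning on a strict left truncation of an interval strictly raises the posterior expectation of the state, and conditioning on a strict right truncation strictly lowers it. -/

import Mathlib

/-!
The posterior mean `postMean` is strictly increasing in the partner's signal, and `phi` is a
strictly positive continuous density. Hence the `phi`-weighted average of `postMean` over `[α, m]`
lies strictly below its value at `m`, and the average over `[m, β]` strictly above it
(`weighted_lt_right`, `left_lt_weighted`). The average over `[α, β]` is a mediant of these two
averages, so it lies strictly between them (`weighted_average_between`).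
-/

open MeasureTheory Set Filter

noncomputable section

/-- Posterior mean of the state given both signal values in the Gaussian model. -/
def postMean (σ σa σb sa sb : ℝ) : ℝ :=
  σ ^ 2 * (sa * σb ^ 2 + sb * σa ^ 2) / (σa ^ 2 * σb ^ 2 + σ ^ 2 * (σa ^ 2 + σb ^ 2))

/-- Conditional density of player `b`'s signal given player `a`'s signal `sa`. -/
def phi (σ σa σb sa u : ℝ) : ℝ :=
  Real.exp (-(u - sa * σ ^ 2 / (σ ^ 2 + σa ^ 2)) ^ 2 /
      (2 * ((σa ^ 2 * σb ^ 2 + σ ^ 2 * (σa ^ 2 + σb ^ 2)) / (σ ^ 2 + σa ^ 2)))) /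
    Real.sqrt (2 * Real.pi * ((σa ^ 2 * σb ^ 2 + σ ^ 2 * (σa ^ 2 + σb ^ 2)) / (σ ^ 2 + σa ^ 2)))

/-- Conditional expectation of the state given `sa` and the event `s_b ∈ S`. -/
def Ea (σ σa σb : ℝ) (sa : ℝ) (S : Set ℝ) : ℝ :=
  (∫ u in S, postMean σ σa σb sa u * phi σ σa σb sa u) / ∫ u in S, phi σ σa σb sa u

/-- The weighted integral of a strictly increasing function is less than its right endpoint value
times the total weight. -/
lemma weighted_lt_right {f g : ℝ → ℝ} (hf : Continuous f) (hg : Continuous g) (hmono : StrictMono f)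
    (hpos : ∀ u, 0 < g u) {a b : ℝ} (hab : a < b) :
    (∫ u in a..b, f u * g u) < f b * ∫ u in a..b, g u := by
  rw [← intervalIntegral.integral_const_mul]
  refine intervalIntegral.integral_lt_integral_of_continuousOn_of_le_of_exists_lt hab
    (by fun_prop) (by fun_prop) (fun u hu => ?_) ⟨a, left_mem_Icc.2 hab.le, ?_⟩
  · exact mul_le_mul_of_nonneg_right (hmono.monotone hu.2) (hpos u).le
  · exact mul_lt_mul_of_pos_right (hmono hab) (hpos a)

/-- The weighted integral of a strictly increasing function exceeds its left endpoint value
times the total weight. -/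
lemma left_lt_weighted {f g : ℝ → ℝ} (hf : Continuous f) (hg : Continuous g) (hmono : StrictMono f)
    (hpos : ∀ u, 0 < g u) {a b : ℝ} (hab : a < b) :
    f a * (∫ u in a..b, g u) < ∫ u in a..b, f u * g u := by
  rw [← intervalIntegral.integral_const_mul]
  refine intervalIntegral.integral_lt_integral_of_continuousOn_of_le_of_exists_lt hab
    (by fun_prop) (by fun_prop) (fun u hu => ?_) ⟨b, right_mem_Icc.2 hab.le, ?_⟩
  · exact mul_le_mul_of_nonneg_right (hmono.monotone hu.1.le) (hpos u).le
  · exact mul_lt_mul_of_pos_right (hmono hab) (hpos b)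

/-- Cutting an interval at an interior point strictly separates the weighted averages of a strictly
increasing function: the average over the whole lies strictly between those over the parts. -/
lemma weighted_average_between {f g : ℝ → ℝ} (hf : Continuous f) (hg : Continuous g)
    (hmono : StrictMono f) (hpos : ∀ u, 0 < g u) {a m b : ℝ} (ham : a < m) (hmb : m < b) :
    (∫ u in Icc a m, f u * g u) / (∫ u in Icc a m, g u) <
        (∫ u in Icc a b, f u * g u) / (∫ u in Icc a b, g u) ∧
      (∫ u in Icc a b, f u * g u) / (∫ u in Icc a b, g u) <
        (∫ u in Icc m b, f u * g u) / (∫ u in Icc m b, g u) := by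
  have hfg : Continuous fun u => f u * g u := hf.mul hg
  simp only [integral_Icc_eq_integral_Ioc, ← intervalIntegral.integral_of_le ham.le,
    ← intervalIntegral.integral_of_le hmb.le, ← intervalIntegral.integral_of_le (ham.trans hmb).le]
  rw [← intervalIntegral.integral_add_adjacent_intervals (hg.intervalIntegrable a m)
      (hg.intervalIntegrable m b),
    ← intervalIntegral.integral_add_adjacent_intervals (hfg.intervalIntegrable a m)
      (hfg.intervalIntegrable m b)]
  have hp : 0 < ∫ u in a..m, g u :=
    intervalIntegral.intervalIntegral_pos_of_pos (hg.intervalIntegrable a m) hpos ham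
  have hq : 0 < ∫ u in m..b, g u :=
    intervalIntegral.intervalIntegral_pos_of_pos (hg.intervalIntegrable m b) hpos hmb
  have hA := weighted_lt_right hf hg hmono hpos ham
  have hB := left_lt_weighted hf hg hmono hpos hmb
  generalize (∫ u in a..m, g u) = p at *
  generalize (∫ u in m..b, g u) = q at *
  generalize (∫ u in a..m, f u * g u) = A at *
  generalize (∫ u in m..b, f u * g u) = B at *
  have hcross : A * q < B * p := by
    have h₁ := mul_lt_mul_of_pos_right hA hq
    have h₂ := mul_lt_mul_of_pos_right hB hp
    linarith
  constructor
  · rw [div_lt_div_iff₀ hp (add_pos hp hq)]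
    linarith
  · rw [div_lt_div_iff₀ (add_pos hp hq) hq]
    linarith

lemma strictMono_postMean {σ σa σb : ℝ} (hσ : 0 < σ) (hσa : 0 < σa) (hσb : 0 < σb) (sa : ℝ) :
    StrictMono (postMean σ σa σb sa) := by
  intro u v huv
  unfold postMean
  gcongr

lemma continuous_postMean (σ σa σb sa : ℝ) : Continuous (postMean σ σa σb sa) := by
  unfold postMean
  exact Continuous.div_const (by fun_prop) _

lemma continuous_phi (σ σa σb sa : ℝ) : Continuous (phi σ σa σb sa) := by
  unfold phi
  exact Continuous.div_const (Real.continuous_exp.comp (Continuous.div_const (by fun_prop) _)) _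

lemma phi_pos {σ σa σb : ℝ} (hσ : 0 < σ) (hσa : 0 < σa) (hσb : 0 < σb) (sa u : ℝ) :
    0 < phi σ σa σb sa u := by
  unfold phi
  positivity

/-- for `α < m < β`, a strict left truncation of the interval `[α, β]`
strictly raises the posterior expectation of the state, and a strict right truncation
strictly lowers it:  `E_a(s_a, [α, m]) < E_a(s_a, [α, β]) < E_a(s_a, [m, β])`. -/
theorem stmt17 (σ σa σb : ℝ) (hσ : 0 < σ) (hσa : 0 < σa) (hσb : 0 < σb)
    (sa α m β : ℝ) (hαm : α < m) (hmβ : m < β) :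
    Ea σ σa σb sa (Icc α m) < Ea σ σa σb sa (Icc α β) ∧
    Ea σ σa σb sa (Icc α β) < Ea σ σa σb sa (Icc m β) := by
  exact weighted_average_between (continuous_postMean σ σa σb sa) (continuous_phi σ σa σb sa)
    (strictMono_postMean hσ hσa hσb sa) (phi_pos hσ hσa hσb sa) hαm hmβ
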